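/- arXiv:cs/0605008 — 2 statements merged into one kernel-verified Lean document; each statement's English description precedes it below -/
import Mathlib

section
/- Let E and F be finite sets, let k ≥ 1, and let g = (g_1,…,g_k) be a k-tuple of functions from E to F. Then the set of minimal samples of g over E (i.e., the set of pairs (P,(c_i)_{i∈P}) with P ⊆ {1,…,k} and c_i ∈ F for i ∈ P that are minimal samples of g over E) is finite and has cardinality at most k!. -/
/-- A minimal sample is represented by a function `s : Fin k → Option F`,
with `s i = some cᵢ` when `i ∈ P` and `s i = none` (the symbol `-`) otherwise.
`s` is a sample of `g` over `E` if every element of `E` is covered,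
i.e. `E = ⋃_{i ∈ P} g_i⁻¹(c_i)`. -/
def IsSampleOpt {E F : Type*} {k : ℕ} (g : Fin k → E → F)
    (s : Fin k → Option F) : Prop :=
  ∀ e : E, ∃ i : Fin k, s i = some (g i e)

/-- A sample is minimal if dropping any index `j` of its support breaks the covering. -/
def IsMinimalSampleOpt {E F : Type*} {k : ℕ} (g : Fin k → E → F)
    (s : Fin k → Option F) : Prop :=
  IsSampleOpt g s ∧ ∀ j : Fin k, s j ≠ none → ∃ e : E, ∀ i : Fin k, i ≠ j → s i ≠ some (g i e)

/-!
Fix a partial choice `t` of values and count the minimal samples extending it. If `t` already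
covers `E`, minimality leaves at most `t` itself. Otherwise some `e : E` is uncovered, and every
sample extending `t` must cover it by assigning `g j e` to an index `j` unassigned in `t`. With `m`
unassigned indices this gives `m` branches, each with `m - 1` unassigned indices, hence at most
`m!` minimal samples. The theorem is the case where `t` assigns nothing.
-/

open Function

open scoped Nat

section PartialAssignment

variable {ι F : Type*} {s t : ι → Option F} {i j : ι} {c : F}

/-- The partial assignment `s` extends the partial assignment `t`: every value assigned by `t` is
assigned by `s`. -/
def Extends (s t : ι → Option F) : Prop :=
  ∀ ⦃i c⦄, t i = some c → s i = some c

theorem extends_none (s : ι → Option F) : Extends s fun _ ↦ none :=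
  fun _ _ h ↦ nomatch h

theorem Extends.update [DecidableEq ι] (hst : Extends s t) (hsj : s j = some c) :
    Extends s (update t j (some c)) := by
  intro i d hi
  obtain rfl | hij := eq_or_ne i j
  · rw [hsj, ← hi, update_self]
  · exact hst (by rwa [update_of_ne hij] at hi)

/-- The indices left without a value by the partial assignment `t`. Their number drives the
induction behind the factorial bound. -/
def unassigned [Fintype ι] (t : ι → Option F) : Finset ι :=
  {i | t i = none}

@[simp]
theorem mem_unassigned [Fintype ι] : i ∈ unassigned t ↔ t i = none := by
  simp [unassigned]

theorem unassigned_none [Fintype ι] :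
    unassigned (fun _ : ι ↦ (none : Option F)) = Finset.univ := by
  simp [unassigned]

theorem unassigned_update_some [Fintype ι] [DecidableEq ι] (t : ι → Option F) (j : ι) (c : F) :
    unassigned (update t j (some c)) = (unassigned t).erase j := by
  ext i
  obtain rfl | hij := eq_or_ne i j <;> simp [*]

end PartialAssignment

section MinimalExtensions

variable {E F : Type*} {k : ℕ} {g : Fin k → E → F} {s t : Fin k → Option F}

theorem IsMinimalSampleOpt.eq_of_extends (hs : IsMinimalSampleOpt g s) (ht : IsSampleOpt g t)
    (hst : Extends s t) : s = t := by
  funext j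
  cases htj : t j with
  | some c => exact hst htj
  | none =>
    by_contra hsj
    obtain ⟨e, he⟩ := hs.2 j hsj
    obtain ⟨i, hi⟩ := ht e
    have hij : i ≠ j := by
      rintro rfl
      simp [htj] at hi
    exact he i hij (hst hi)

/-- The minimal samples of `g` that extend the partial assignment `t`. -/
def minimalExtensions (g : Fin k → E → F) (t : Fin k → Option F) : Set (Fin k → Option F) :=
  {s | IsMinimalSampleOpt g s ∧ Extends s t}

theorem minimalExtensions_none (g : Fin k → E → F) :
    minimalExtensions g (fun _ ↦ none) = {s | IsMinimalSampleOpt g s} := by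
  simp [minimalExtensions, extends_none]

theorem IsSampleOpt.subsingleton_minimalExtensions (ht : IsSampleOpt g t) :
    (minimalExtensions g t).Subsingleton :=
  fun _ hs _ hs' ↦ (hs.1.eq_of_extends ht hs.2).trans (hs'.1.eq_of_extends ht hs'.2).symm

theorem minimalExtensions_subset_biUnion_update {e : E} (he : ∀ i, t i ≠ some (g i e)) :
    minimalExtensions g t ⊆
      ⋃ j ∈ unassigned t, minimalExtensions g (update t j (some (g j e))) := by
  rintro s ⟨hs, hst⟩
  obtain ⟨j, hsj⟩ := hs.1 e
  have htj : t j = none := Option.eq_none_iff_forall_ne_some.mpr fun c hc ↦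
    he j (hc.trans ((hst hc).symm.trans hsj))
  exact Set.mem_biUnion (mem_unassigned.mpr htj) ⟨hs, hst.update hsj⟩

theorem encard_minimalExtensions_le_factorial (g : Fin k → E → F) (t : Fin k → Option F) :
    (minimalExtensions g t).encard ≤ ((unassigned t).card ! : ℕ) := by
  induction hU : unassigned t using Finset.strongInduction generalizing t with
  | H U ih =>
  by_cases ht : IsSampleOpt g t
  · calc (minimalExtensions g t).encard
        ≤ 1 := Set.encard_le_one_iff_subsingleton.mpr ht.subsingleton_minimalExtensions
      _ ≤ (U.card ! : ℕ) := mod_cast U.card.factorial_pos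
  · obtain ⟨e, he⟩ : ∃ e, ∀ i, t i ≠ some (g i e) := by simpa [IsSampleOpt] using ht
    have branch_le : ∀ j ∈ U,
        (minimalExtensions g (update t j (some (g j e)))).encard ≤ ((U.card - 1)! : ℕ) := by
      intro j hj
      rw [← Finset.card_erase_of_mem hj]
      exact ih _ (Finset.erase_ssubset hj) _ (by rw [unassigned_update_some, hU])
    calc (minimalExtensions g t).encard
        ≤ (⋃ j ∈ U, minimalExtensions g (update t j (some (g j e)))).encard :=
          Set.encard_le_encard (hU ▸ minimalExtensions_subset_biUnion_update he)
      _ ≤ ∑ j ∈ U, (minimalExtensions g (update t j (some (g j e)))).encard :=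
          U.set_encard_biUnion_le _
      _ ≤ U.card • ((U.card - 1)! : ℕ) := Finset.sum_le_card_nsmul _ _ _ branch_le
      _ ≤ (U.card ! : ℕ) := by
          obtain hU₀ | hU₀ := eq_or_ne U.card 0
          · simp [hU₀]
          · rw [nsmul_eq_mul, ← Nat.cast_mul, Nat.mul_factorial_pred hU₀]

end MinimalExtensions

theorem stmt_3_general {E F : Type*} {k : ℕ} (g : Fin k → E → F) :
    {s : Fin k → Option F | IsMinimalSampleOpt g s}.Finite ∧
      {s : Fin k → Option F | IsMinimalSampleOpt g s}.ncard ≤ Nat.factorial k := by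
  rw [← Set.encard_le_coe_iff_finite_ncard_le, ← minimalExtensions_none]
  simpa only [unassigned_none, Finset.card_fin] using
    encard_minimalExtensions_le_factorial g fun _ ↦ none

theorem stmt_3 {E F : Type*} [Fintype E] [Fintype F] {k : ℕ} (hk : 1 ≤ k)
    (g : Fin k → E → F) :
    {s : Fin k → Option F | IsMinimalSampleOpt g s}.Finite ∧
      {s : Fin k → Option F | IsMinimalSampleOpt g s}.ncard ≤ Nat.factorial k :=
  stmt_3_general g
end

section
/- Let D be a finite set, let k ≥ 1, and let f_1,…,f_k and g_1,…,g_k be functions from D to D. Then the statement 'for all x, y ∈ D there exists an index i ∈ {1,…,k} with f_i(x) = g_i(y)' holds if and only if for every x ∈ D there exists a minimal sample (P,(c_i)_{i∈P}) of (g_1,…,g_k) over D such that f_i(x) = c_i for every i ∈ P. -/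
/-- `(P, c)` is a sample of the `k`-tuple of functions `g` over `D`:
`D = ⋃_{i ∈ P} g_i⁻¹(c_i)`, i.e. every element of `D` is covered. -/
def IsSample {D F : Type*} {k : ℕ} (g : Fin k → D → F)
    (P : Finset (Fin k)) (c : Fin k → F) : Prop :=
  ∀ y : D, ∃ i ∈ P, g i y = c i

/-- A sample is minimal if dropping any index `j ∈ P` breaks the covering. -/
def IsMinimalSample {D F : Type*} {k : ℕ} (g : Fin k → D → F)
    (P : Finset (Fin k)) (c : Fin k → F) : Prop :=
  IsSample g P c ∧ ∀ j ∈ P, ∃ y : D, ∀ i ∈ P.erase j, g i y ≠ c i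

section

variable {D F : Type*} {k : ℕ} {g : Fin k → D → F} {P Q : Finset (Fin k)} {c c' : Fin k → F}

theorem IsSample.mono (hP : IsSample g P c) (hPQ : P ⊆ Q) : IsSample g Q c := fun y =>
  let ⟨i, hi, hy⟩ := hP y
  ⟨i, hPQ hi, hy⟩

theorem IsSample.congr (hP : IsSample g P c) (hc : ∀ i ∈ P, c i = c' i) :
    IsSample g P c' := fun y =>
  let ⟨i, hi, hy⟩ := hP y
  ⟨i, hi, hy.trans (hc i hi)⟩

theorem isMinimalSample_iff_minimal : IsMinimalSample g P c ↔ Minimal (IsSample g · c) P := by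
  rw [Finset.minimal_iff_forall_erase fun _ _ hP hPQ => hP.mono hPQ]
  simp only [IsMinimalSample, IsSample, not_forall, not_exists, not_and, ne_eq]

theorem IsSample.exists_isMinimalSample (hP : IsSample g P c) :
    ∃ Q ⊆ P, IsMinimalSample g Q c := by
  simpa only [isMinimalSample_iff_minimal] using
    exists_minimal_le_of_wellFoundedLT (IsSample g · c) P hP

theorem isSample_univ_iff_exists_isMinimalSample :
    IsSample g Finset.univ c ↔
      ∃ (P : Finset (Fin k)) (c' : Fin k → F), IsMinimalSample g P c' ∧ ∀ i ∈ P, c i = c' i := by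
  constructor
  · intro h
    obtain ⟨P, -, hP⟩ := h.exists_isMinimalSample
    exact ⟨P, c, hP, fun _ _ => rfl⟩
  · rintro ⟨P, c', hP, hc⟩
    exact (hP.1.congr fun i hi => (hc i hi).symm).mono P.subset_univ

end

theorem stmt_5_general {X D F : Type*} {k : ℕ} (f : Fin k → X → F) (g : Fin k → D → F) :
    (∀ (x : X) (y : D), ∃ i : Fin k, f i x = g i y) ↔
      ∀ x : X, ∃ (P : Finset (Fin k)) (c : Fin k → F),
        IsMinimalSample g P c ∧ ∀ i ∈ P, f i x = c i := by
  refine forall_congr' fun x => ?_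
  rw [← isSample_univ_iff_exists_isMinimalSample (c := (f · x))]
  simp only [IsSample, Finset.mem_univ, true_and, eq_comm]

theorem stmt_5 {D : Type*} [Fintype D] {k : ℕ} (hk : 1 ≤ k)
    (f g : Fin k → D → D) :
    (∀ x y : D, ∃ i : Fin k, f i x = g i y) ↔
      ∀ x : D, ∃ (P : Finset (Fin k)) (c : Fin k → D),
        IsMinimalSample g P c ∧ ∀ i ∈ P, f i x = c i :=
  stmt_5_general f g
end
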